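/- Fix S ⊆ N and j ∉ S. Then the pivot element satisfies A^S_{jj} = (1 − β P_{jj} + β Σ_{k∈S} A^S_{jk} P_{kj}) / (1−β), and A^S_{jj} > 0. (Equation (21) of the paper, together with positivity of the pivot element used by the fast-pivoting algorithm.) -/

import Mathlib

open Matrix BigOperators
open scoped Classical

noncomputable section

/-- Transition matrix of the `S`-active policy: row `i` of `P` if `i ∈ S`,
the `i`-th standard unit row otherwise. -/
def PAct {N : Type*} [DecidableEq N] (P : Matrix N N ℝ) (S : Finset N) : Matrix N N ℝ :=
  fun i j => if i ∈ S then P i j else if i = j then 1 else 0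

/-- Transition matrix of the `Sᶜ`-active policy. -/
def PPas {N : Type*} [DecidableEq N] (P : Matrix N N ℝ) (S : Finset N) : Matrix N N ℝ :=
  fun i j => if i ∈ S then (if i = j then 1 else 0) else P i j

/-- Basis matrix `B^S = I - β P^S`. -/
def BMat {N : Type*} [Fintype N] [DecidableEq N] (β : ℝ) (P : Matrix N N ℝ) (S : Finset N) :
    Matrix N N ℝ := 1 - β • PAct P S

/-- Non-basic matrix `N^S = I - β P^{Sᶜ}`. -/
def NMat {N : Type*} [Fintype N] [DecidableEq N] (β : ℝ) (P : Matrix N N ℝ) (S : Finset N) :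
    Matrix N N ℝ := 1 - β • PPas P S

/-- Basis inverse `H^S = (B^S)⁻¹`. -/
def HMat {N : Type*} [Fintype N] [DecidableEq N] (β : ℝ) (P : Matrix N N ℝ) (S : Finset N) :
    Matrix N N ℝ := (BMat β P S)⁻¹

/-- Tableau matrix `A^S = N^S · H^S`. -/
def AMat {N : Type*} [Fintype N] [DecidableEq N] (β : ℝ) (P : Matrix N N ℝ) (S : Finset N) :
    Matrix N N ℝ := NMat β P S * HMat β P S

/-- Work measure `g^S = H^S · 1_S`. -/
def gWork {N : Type*} [Fintype N] [DecidableEq N] (β : ℝ) (P : Matrix N N ℝ) (S : Finset N) :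
    N → ℝ := (HMat β P S).mulVec (fun j => if j ∈ S then 1 else 0)

/-- Reward measure `f^S = H^S · (R·1_S)`. -/
def fRew {N : Type*} [Fintype N] [DecidableEq N] (β : ℝ) (P : Matrix N N ℝ) (R : N → ℝ)
    (S : Finset N) : N → ℝ := (HMat β P S).mulVec (fun j => if j ∈ S then R j else 0)

/-- Marginal work `w_i^S`. -/
def wMarg {N : Type*} [Fintype N] [DecidableEq N] (β : ℝ) (P : Matrix N N ℝ) (S : Finset N)
    (i : N) : ℝ :=
  if i ∈ S then (1 - β) * gWork β P S i
  else 1 + β * ∑ j ∈ S, P i j * gWork β P S j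

/-- Marginal reward `r_i^S`. -/
def rMarg {N : Type*} [Fintype N] [DecidableEq N] (β : ℝ) (P : Matrix N N ℝ) (R : N → ℝ)
    (S : Finset N) (i : N) : ℝ :=
  if i ∈ S then (1 - β) * fRew β P R S i
  else R i + β * ∑ j ∈ S, P i j * fRew β P R S j

/-- Marginal productivity rate `ν_i^S = r_i^S / w_i^S`. -/
def nuMarg {N : Type*} [Fintype N] [DecidableEq N] (β : ℝ) (P : Matrix N N ℝ) (R : N → ℝ)
    (S : Finset N) (i : N) : ℝ := rMarg β P R S i / wMarg β P S i

/-- Feasibility of a pair of row vectors `(x⁰, x¹)` for initial state `i`: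
`x⁰, x¹ ≥ 0` and `(1-β) x⁰ + x¹ (I - β P) = e_i`. -/
def Feasible {N : Type*} [Fintype N] [DecidableEq N] (β : ℝ) (P : Matrix N N ℝ) (i : N)
    (x0 x1 : N → ℝ) : Prop :=
  (∀ j, 0 ≤ x0 j) ∧ (∀ j, 0 ≤ x1 j) ∧
    (1 - β) • x0 + Matrix.vecMul x1 (1 - β • P) = Pi.single i 1

/-- Modified reward vector `R̂ = R - (I - βP)·Q`. -/
def Rhat {N : Type*} [Fintype N] [DecidableEq N] (β : ℝ) (P : Matrix N N ℝ) (R Q : N → ℝ) :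
    N → ℝ := fun i => R i - ((1 - β • P).mulVec Q) i

/-- Discounted maximum principle for a row-stochastic matrix. -/
lemma maxPrinciple_aux {N : Type*} [Fintype N] [DecidableEq N] [Nonempty N]
    (Q : Matrix N N ℝ) (hQ0 : ∀ i j, 0 ≤ Q i j) (hQ1 : ∀ i, ∑ j, Q i j = 1)
    (β : ℝ) (hβ0 : 0 < β) (hβ1 : β < 1) (v : N → ℝ)
    (hv : ∀ i, v i ≤ β * ∑ k, Q i k * v k) : ∀ i, v i ≤ 0 := by
  obtain ⟨m, hm⟩ := Finite.exists_max v
  have h1 : ∑ k, Q m k * v k ≤ v m := by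
    calc ∑ k, Q m k * v k ≤ ∑ k, Q m k * v m :=
          Finset.sum_le_sum fun k _ => mul_le_mul_of_nonneg_left (hm k) (hQ0 m k)
      _ = v m := by rw [← Finset.sum_mul, hQ1, one_mul]
  have h2 := hv m
  have h3 : v m ≤ 0 := by nlinarith
  exact fun i => (hm i).trans h3

lemma pAct_nonneg_aux {N : Type*} [Fintype N] [DecidableEq N]
    (P : Matrix N N ℝ) (hP0 : ∀ i j, 0 ≤ P i j) (S : Finset N) (i j : N) :
    0 ≤ PAct P S i j := by
  unfold PAct
  split_ifs
  · exact hP0 i j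
  · exact zero_le_one
  · exact le_rfl

lemma pAct_sum_aux {N : Type*} [Fintype N] [DecidableEq N]
    (P : Matrix N N ℝ) (hP1 : ∀ i, ∑ j, P i j = 1) (S : Finset N) (i : N) :
    ∑ j, PAct P S i j = 1 := by
  unfold PAct
  by_cases h : i ∈ S
  · simpa [h] using hP1 i
  · simp [h]

lemma bMat_mulVec_aux {N : Type*} [Fintype N] [DecidableEq N]
    (β : ℝ) (P : Matrix N N ℝ) (S : Finset N) (v : N → ℝ) (i : N) :
    (BMat β P S).mulVec v i = v i - β * ∑ k, PAct P S i k * v k := by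
  unfold BMat
  rw [Matrix.sub_mulVec, Matrix.one_mulVec, Matrix.smul_mulVec]
  rfl

lemma bMat_det_aux {N : Type*} [Fintype N] [DecidableEq N] [Nonempty N]
    (P : Matrix N N ℝ) (hP0 : ∀ i j, 0 ≤ P i j) (hP1 : ∀ i, ∑ j, P i j = 1)
    (β : ℝ) (hβ0 : 0 < β) (hβ1 : β < 1) (S : Finset N) : IsUnit (BMat β P S).det := by
  rw [isUnit_iff_ne_zero]
  intro h
  obtain ⟨v, hv0, hv⟩ := Matrix.exists_mulVec_eq_zero_iff.mpr h
  have hE : ∀ i, v i - β * ∑ k, PAct P S i k * v k = 0 := fun i => by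
    rw [← bMat_mulVec_aux, hv]; rfl
  have h1 := maxPrinciple_aux _ (pAct_nonneg_aux P hP0 S) (pAct_sum_aux P hP1 S) β hβ0 hβ1 v
    (fun i => by linarith [hE i])
  have h2 := maxPrinciple_aux _ (pAct_nonneg_aux P hP0 S) (pAct_sum_aux P hP1 S) β hβ0 hβ1
    (fun i => - v i)
    (fun i => by simp only [mul_neg, Finset.sum_neg_distrib]; linarith [hE i])
  exact hv0 (funext fun i => le_antisymm (h1 i) (by simpa using h2 i))

/-- equation (21): formula and positivity of the pivot element. -/
theorem stmt15 {N : Type*} [Fintype N] [DecidableEq N] [Nonempty N]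
    (P : Matrix N N ℝ) (hP0 : ∀ i j, 0 ≤ P i j) (hP1 : ∀ i, ∑ j, P i j = 1)
    (β : ℝ) (hβ0 : 0 < β) (hβ1 : β < 1)
    (S : Finset N) (j : N) (hj : j ∉ S) :
    AMat β P S j j
      = (1 - β * P j j + β * ∑ k ∈ S, AMat β P S j k * P k j) / (1 - β) ∧
    0 < AMat β P S j j := by
  have hdet := bMat_det_aux P hP0 hP1 β hβ0 hβ1 S
  have hb : 0 < 1 - β := by linarith
  constructor
  · have hAB : AMat β P S * BMat β P S = NMat β P S := by
      unfold AMat HMat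
      rw [Matrix.mul_assoc, Matrix.nonsing_inv_mul _ hdet, Matrix.mul_one]
    have h1 := congrFun (congrFun hAB j) j
    have h2 : (AMat β P S * BMat β P S) j j
        = AMat β P S j j - β * ∑ k, AMat β P S j k * PAct P S k j := by
      unfold BMat
      rw [Matrix.mul_sub, Matrix.mul_one, Matrix.mul_smul]
      rfl
    have h3 : NMat β P S j j = 1 - β * P j j := by
      simp [NMat, PPas, hj]
    have h4 : ∑ k, AMat β P S j k * PAct P S k j
        = ∑ k ∈ S, AMat β P S j k * P k j + AMat β P S j j := by
      have e : ∀ k, AMat β P S j k * PAct P S k j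
          = (if k ∈ S then AMat β P S j k * P k j else 0)
            + (if k = j then AMat β P S j k else 0) := by
        intro k
        unfold PAct
        by_cases hk : k ∈ S
        · have : k ≠ j := fun h => hj (h ▸ hk)
          simp [hk, this]
        · simp [hk]
      rw [Finset.sum_congr rfl fun k _ => e k, Finset.sum_add_distrib]
      simp
    rw [h2, h3, h4] at h1
    rw [eq_div_iff hb.ne']
    linarith
  · set h : N → ℝ := fun k => HMat β P S k j with hh
    have hB : ∀ i, h i - β * ∑ k, PAct P S i k * h k = if i = j then 1 else 0 := by
      intro i
      rw [← bMat_mulVec_aux]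
      have : BMat β P S * HMat β P S = 1 := Matrix.mul_nonsing_inv _ hdet
      have := congrFun (congrFun this i) j
      rw [Matrix.one_apply] at this
      exact this
    have hhj : (1 - β) * h j = 1 := by
      have := hB j
      simp [PAct, hj] at this
      linarith
    have hle := maxPrinciple_aux _ (pAct_nonneg_aux P hP0 S) (pAct_sum_aux P hP1 S) β hβ0 hβ1
      (fun i => h i - h j) (fun i => by
        have e := hB i
        have : ∑ k, PAct P S i k * (h k - h j) = ∑ k, PAct P S i k * h k - h j := by
          simp only [mul_sub, Finset.sum_sub_distrib]
          rw [← Finset.sum_mul, pAct_sum_aux P hP1, one_mul]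
        simp only [this]
        split_ifs at e <;> linarith)
    have hA : AMat β P S j j = h j - β * ∑ k, P j k * h k := by
      have : AMat β P S j j = ((NMat β P S).mulVec h) j := rfl
      rw [this]
      unfold NMat
      rw [Matrix.sub_mulVec, Matrix.one_mulVec, Matrix.smul_mulVec]
      simp [Matrix.mulVec, dotProduct, PPas, hj]
    have hs : ∑ k, P j k * h k ≤ h j := by
      calc ∑ k, P j k * h k ≤ ∑ k, P j k * h j :=
            Finset.sum_le_sum fun k _ =>
              mul_le_mul_of_nonneg_left (by linarith [hle k]) (hP0 j k)
        _ = h j := by rw [← Finset.sum_mul, hP1, one_mul]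
    rw [hA]
    nlinarith
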